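/- Let S ⊆ V be nonempty and let T* ⊆ V ∖ S be a nonempty set such that Δ_S(T*) > RQ(S) and Δ_S(T*) ≥ Δ_S(T) for every nonempty T ⊆ V ∖ S. If S* is a set with S ⊆ S* ⊆ V such that RQ(S*) ≥ RQ(U) for every U with S ⊆ U ⊆ V, then S* ∩ T* ≠ ∅. -/

import Mathlib

open scoped Classical

/-- The value `(x p - x q)^2` of an unordered pair/edge. -/
noncomputable def edgeVal {V : Type*} (x : V → ℝ) : Sym2 V → ℝ :=
  Sym2.lift ⟨fun p q => (x p - x q) ^ 2, fun p q => by ring⟩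

/-- Rayleigh quotient of the subgraph induced on `S`:
numerator sums `(x p - x q)^2` over unordered edges of `G` with both endpoints in `S`. -/
noncomputable def RQ {V : Type*} [Fintype V] [DecidableEq V]
    (G : SimpleGraph V) (x : V → ℝ) (S : Finset V) : ℝ :=
  (∑ e ∈ G.edgeFinset.filter (fun e => ∀ v ∈ e, v ∈ S), edgeVal x e) /
    (∑ p ∈ S, x p ^ 2)

/-- Increment of a single node `v` relative to `S`. -/
noncomputable def deltaNode {V : Type*} [Fintype V] [DecidableEq V]
    (G : SimpleGraph V) (x : V → ℝ) (S : Finset V) (v : V) : ℝ :=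
  (∑ r ∈ S.filter (fun r => G.Adj v r), (x v - x r) ^ 2) / (x v) ^ 2

/-- Increment of a nodeset `T` (disjoint from `S`) relative to `S`:
cross edges between `T` and `S` plus edges internal to `T`, over the mass of `T`. -/
noncomputable def deltaSet {V : Type*} [Fintype V] [DecidableEq V]
    (G : SimpleGraph V) (x : V → ℝ) (S T : Finset V) : ℝ :=
  ((∑ v ∈ T, ∑ r ∈ S.filter (fun r => G.Adj v r), (x v - x r) ^ 2) +
      ∑ e ∈ G.edgeFinset.filter (fun e => ∀ w ∈ e, w ∈ T), edgeVal x e) /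
    (∑ v ∈ T, x v ^ 2)

/-!
For `T` disjoint from `S`, the edges within `S ∪ T` are those within `S`, those within `T` and those
between the two, so `RQ (S ∪ T)` is the mean of `RQ S` and `Δ_S(T)` weighted by the masses
`∑ x v ^ 2` of `S` and `T`. Taking `T = S* \ S`, the maximality of `Δ_S(T*)` gives
`RQ S* < Δ_S(T*)`. If `T*` were disjoint from `S*`, then `Δ_S(T*) ≤ Δ_{S*}(T*)`, because enlarging
the base set only adds edges to the numerator, and the mean property would give
`RQ (S* ∪ T*) > RQ S*`.
-/

section Edges

variable {V : Type*} (G : SimpleGraph V) {A B : Finset V}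

/-- The edges of `G` with both endpoints in `A`, i.e. the edges of the subgraph induced on `A`. -/
noncomputable def edgesWithin (A : Finset V) : Finset (Sym2 V) :=
  {e ∈ A.sym2 | e ∈ G.edgeSet}

/-- The edges of `G` with one endpoint in `A` and the other in `B`. They are unordered, unlike the
pairs in `G.interedges A B`; the two correspond bijectively when `A` and `B` are disjoint. -/
noncomputable def edgesBetween (A B : Finset V) : Finset (Sym2 V) :=
  (G.interedges A B).image fun p => s(p.1, p.2)

variable {G}

theorem mk_mem_edgesWithin {a b : V} : s(a, b) ∈ edgesWithin G A ↔ G.Adj a b ∧ a ∈ A ∧ b ∈ A := by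
  simp [edgesWithin, and_comm]

theorem mk_mem_edgesBetween {a b : V} :
    s(a, b) ∈ edgesBetween G A B ↔ G.Adj a b ∧ (a ∈ A ∧ b ∈ B ∨ a ∈ B ∧ b ∈ A) := by
  simp only [edgesBetween, Finset.mem_image, Prod.exists, SimpleGraph.mk_mem_interedges_iff,
    Sym2.eq_iff]
  grind [SimpleGraph.adj_comm]

variable (G)

theorem edgesBetween_comm (A B : Finset V) : edgesBetween G A B = edgesBetween G B A := by
  ext ⟨a, b⟩
  simp only [mk_mem_edgesBetween, or_comm]

theorem filter_edgeFinset_eq_edgesWithin [Fintype V] [DecidableEq V] (A : Finset V) :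
    {e ∈ G.edgeFinset | ∀ v ∈ e, v ∈ A} = edgesWithin G A := by
  ext e
  simp [edgesWithin, Finset.mem_sym2_iff, and_comm]

theorem edgesWithin_union [DecidableEq V] (A B : Finset V) :
    edgesWithin G (A ∪ B) = edgesWithin G A ∪ (edgesBetween G B A ∪ edgesWithin G B) := by
  ext ⟨a, b⟩
  simp only [Finset.mem_union, mk_mem_edgesWithin, mk_mem_edgesBetween]
  tauto

theorem disjoint_edgesWithin (h : Disjoint A B) :
    Disjoint (edgesWithin G A) (edgesWithin G B) := by
  rw [Finset.disjoint_left] at h ⊢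
  rintro ⟨a, b⟩ hA hB
  exact h (mk_mem_edgesWithin.1 hA).2.1 (mk_mem_edgesWithin.1 hB).2.1

theorem disjoint_edgesBetween_edgesWithin_left (h : Disjoint A B) :
    Disjoint (edgesBetween G A B) (edgesWithin G A) := by
  rw [Finset.disjoint_left] at h ⊢
  rintro ⟨a, b⟩ hAB hA
  obtain ⟨-, ha, hb⟩ := mk_mem_edgesWithin.1 hA
  obtain ⟨-, ⟨-, hb'⟩ | ⟨ha', -⟩⟩ := mk_mem_edgesBetween.1 hAB
  · exact h hb hb'
  · exact h ha ha'

theorem disjoint_edgesBetween_edgesWithin_right (h : Disjoint A B) :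
    Disjoint (edgesBetween G A B) (edgesWithin G B) :=
  edgesBetween_comm G A B ▸ disjoint_edgesBetween_edgesWithin_left G h.symm

theorem sum_edgesWithin_union [DecidableEq V] {M : Type*} [AddCommMonoid M] (f : Sym2 V → M)
    (h : Disjoint B A) :
    ∑ e ∈ edgesWithin G (A ∪ B), f e =
      ∑ e ∈ edgesWithin G A, f e +
        (∑ e ∈ edgesBetween G B A, f e + ∑ e ∈ edgesWithin G B, f e) := by
  rw [edgesWithin_union, Finset.sum_union, Finset.sum_union]
  · exact disjoint_edgesBetween_edgesWithin_left G h
  · exact Finset.disjoint_union_right.2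
      ⟨(disjoint_edgesBetween_edgesWithin_right G h).symm, disjoint_edgesWithin G h.symm⟩

theorem sum_edgesBetween {M : Type*} [AddCommMonoid M] (f : Sym2 V → M) (h : Disjoint A B) :
    ∑ e ∈ edgesBetween G A B, f e = ∑ a ∈ A, ∑ b ∈ B with G.Adj a b, f s(a, b) := by
  have mk_injOn : Set.InjOn (fun p : V × V => s(p.1, p.2)) (G.interedges A B) := by
    rintro ⟨a, b⟩ hab ⟨c, d⟩ hcd heq
    obtain ⟨ha, -, -⟩ := G.mk_mem_interedges_iff.1 hab
    obtain ⟨-, hd, -⟩ := G.mk_mem_interedges_iff.1 hcd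
    obtain ⟨rfl, rfl⟩ | ⟨rfl, rfl⟩ := Sym2.eq_iff.1 heq
    · rfl
    · exact (Finset.disjoint_left.1 h ha hd).elim
  rw [edgesBetween, Finset.sum_image mk_injOn, SimpleGraph.interedges, Rel.interedges,
    Finset.sum_filter, Finset.sum_product]
  simp only [Finset.sum_filter]

end Edges

section Mass

variable {V : Type*} (x : V → ℝ)

/-- The squared norm of the signal `x` restricted to `A`: the denominator of the Rayleigh quotient
of `A`, and of the increment of `A` relative to any base set. -/
noncomputable def mass (A : Finset V) : ℝ :=
  ∑ v ∈ A, x v ^ 2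

variable {x}

theorem mass_pos (hx : ∀ v, x v ≠ 0) {A : Finset V} (hA : A.Nonempty) : 0 < mass x A :=
  Finset.sum_pos (fun v _ => sq_pos_of_ne_zero (hx v)) hA

theorem mass_union [DecidableEq V] {A B : Finset V} (h : Disjoint A B) :
    mass x (A ∪ B) = mass x A + mass x B :=
  Finset.sum_union h

end Mass

section RayleighQuotient

variable {V : Type*} [Fintype V] [DecidableEq V] (G : SimpleGraph V) {x : V → ℝ} {S T : Finset V}

theorem RQ_eq_sum_div_mass (x : V → ℝ) (S : Finset V) :
    RQ G x S = (∑ e ∈ edgesWithin G S, edgeVal x e) / mass x S := by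
  rw [RQ, filter_edgeFinset_eq_edgesWithin, mass]

theorem deltaSet_eq_sum_div_mass (x : V → ℝ) (h : Disjoint T S) :
    deltaSet G x S T =
      (∑ e ∈ edgesBetween G T S, edgeVal x e + ∑ e ∈ edgesWithin G T, edgeVal x e) / mass x T := by
  rw [deltaSet, filter_edgeFinset_eq_edgesWithin, sum_edgesBetween G _ h, mass]
  rfl

theorem deltaSet_mono_left (x : V → ℝ) (T : Finset V) {S' : Finset V} (h : S ⊆ S') :
    deltaSet G x S T ≤ deltaSet G x S' T := by
  unfold deltaSet
  gcongr

theorem RQ_union (hS : 0 < mass x S) (hT : 0 < mass x T) (h : Disjoint T S) :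
    RQ G x (S ∪ T) =
      (mass x S * RQ G x S + mass x T * deltaSet G x S T) / (mass x S + mass x T) := by
  rw [RQ_eq_sum_div_mass, RQ_eq_sum_div_mass, deltaSet_eq_sum_div_mass G x h,
    mul_div_cancel₀ _ hS.ne', mul_div_cancel₀ _ hT.ne', sum_edgesWithin_union G _ h,
    mass_union h.symm]

theorem RQ_union_lt {c : ℝ} (hS : 0 < mass x S) (hT : 0 < mass x T) (h : Disjoint T S)
    (hRQ : RQ G x S < c) (hΔ : deltaSet G x S T ≤ c) : RQ G x (S ∪ T) < c := by
  rw [RQ_union G hS hT h, div_lt_iff₀' (add_pos hS hT), add_mul]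
  exact add_lt_add_of_lt_of_le (by gcongr) (by gcongr)

theorem RQ_lt_RQ_union (hS : 0 < mass x S) (hT : 0 < mass x T) (h : Disjoint T S)
    (hΔ : RQ G x S < deltaSet G x S T) : RQ G x S < RQ G x (S ∪ T) := by
  rw [RQ_union G hS hT h, lt_div_iff₀' (add_pos hS hT), add_mul]
  gcongr

theorem RQ_lt_of_forall_deltaSet_le (hx : ∀ v, x v ≠ 0) (hS : S.Nonempty) {c : ℝ}
    (hRQ : RQ G x S < c) (hΔ : ∀ T : Finset V, T.Nonempty → Disjoint T S → deltaSet G x S T ≤ c)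
    {U : Finset V} (hSU : S ⊆ U) : RQ G x U < c := by
  obtain rfl | hssub := hSU.eq_or_ssubset
  · exact hRQ
  · have hne : (U \ S).Nonempty := Finset.sdiff_nonempty.2 hssub.not_subset
    rw [← Finset.union_sdiff_of_subset hSU]
    exact RQ_union_lt G (mass_pos hx hS) (mass_pos hx hne) Finset.sdiff_disjoint hRQ
      (hΔ _ hne Finset.sdiff_disjoint)

end RayleighQuotient

/-- **Consequence of Theorem 2.** If `T*` is a nonempty set disjoint from `S` with
`Δ_S(T*) > RQ(S)` and `Δ_S(T*)` maximal among all nonempty sets disjoint from `S`,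
then any maximizer `S*` of the Rayleigh quotient among supersets of `S`
must intersect `T*`. -/
theorem maximizer_meets_deltaMax {V : Type*} [Fintype V] [DecidableEq V]
    (G : SimpleGraph V) (x : V → ℝ) (hx : ∀ v, x v ≠ 0)
    (S : Finset V) (hS : S.Nonempty)
    (Tstar : Finset V) (hTstar : Tstar.Nonempty) (hTdisj : Disjoint Tstar S)
    (hgt : deltaSet G x S Tstar > RQ G x S)
    (hmax : ∀ T : Finset V, T.Nonempty → Disjoint T S →
      deltaSet G x S Tstar ≥ deltaSet G x S T)
    (Sstar : Finset V) (hSsub : S ⊆ Sstar)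
    (hopt : ∀ U : Finset V, S ⊆ U → RQ G x Sstar ≥ RQ G x U) :
    (Sstar ∩ Tstar).Nonempty := by
  by_contra hmeet
  have hdisj : Disjoint Tstar Sstar :=
    (Finset.disjoint_iff_inter_eq_empty.2 (Finset.not_nonempty_iff_eq_empty.1 hmeet)).symm
  have hlt : RQ G x Sstar < deltaSet G x Sstar Tstar :=
    calc
      RQ G x Sstar < deltaSet G x S Tstar := RQ_lt_of_forall_deltaSet_le G hx hS hgt hmax hSsub
      _ ≤ deltaSet G x Sstar Tstar := deltaSet_mono_left G x Tstar hSsub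
  have hincrease : RQ G x Sstar < RQ G x (Sstar ∪ Tstar) :=
    RQ_lt_RQ_union G (mass_pos hx (hS.mono hSsub)) (mass_pos hx hTstar) hdisj hlt
  exact (hopt _ (hSsub.trans Finset.subset_union_left)).not_gt hincrease
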